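/- Let Σ be a finite alphabet and L ⊆ Σ*. If both L and its complement Σ* \ L are accepted by upward-compatible well-structured transition systems, then L is a regular language. -/

import Mathlib

/-!
The residuals `w⁻¹L = {x | w ++ x ∈ L}` are shown to be finitely many; Myhill–Nerode concludes.

Let `U` be a WSTS and `K` any set of words. By the well quasi order there is a *finite* set `F` of
words outside `K` such that every state of `U` accepting some word outside `K` already accepts a
word of `F` (`ULTS.exists_finset_witness`). Hence every language recognised by `U` from some set
of states and disjoint from `F` is contained in `K`. With `U` accepting `L`, this applies to the
residuals of `L`; with a WSTS for `Lᶜ` and with `Kᶜ`, it gives a finite `F' ⊆ K` such that every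
residual of `L` containing `F'` contains `K`. So every point `K` of the compact space `2^(List A)`
has a neighbourhood containing no residual other than possibly `K` itself, and there can only be
finitely many residuals. Compactness enters as the limit of the residuals along an ultrafilter
(`finite_of_forall_isolated`).
-/

/-- A labeled transition system whose states carry a compatible quasi order
(an upward-compatible LTS, ULTS): the final states are upward closed and the
quasi order is a simulation relation. -/
structure ULTS (A : Type) : Type 1 where
  S : Type
  le : S → S → Prop
  le_refl : ∀ s, le s s
  le_trans : ∀ ⦃s t u⦄, le s t → le t u → le s u
  init : Set S
  tr : S → A → Set S
  final : Set S
  final_up : ∀ ⦃s t⦄, s ∈ final → le s t → t ∈ final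
  sim : ∀ ⦃s t⦄ (a : A) ⦃s'⦄, le s t → s' ∈ tr s a → ∃ t', t' ∈ tr t a ∧ le s' t'

namespace ULTS

variable {A : Type}

/-- One-step successors of a set of states. -/
def stepSet (U : ULTS A) (P : Set U.S) (a : A) : Set U.S := ⋃ s ∈ P, U.tr s a

/-- States reachable from `P` by reading a word. -/
def reachSet (U : ULTS A) (P : Set U.S) : List A → Set U.S
  | [] => P
  | a :: w => U.reachSet (U.stepSet P a) w

/-- The language of a ULTS: words that can reach a final state from an initial state. -/
def lang (U : ULTS A) : Set (List A) := {w | (U.reachSet U.init w ∩ U.final).Nonempty}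

/-- The quasi order of the ULTS is a well quasi order; a ULTS with this property
is a (upward-compatible) WSTS. -/
def IsWQO (U : ULTS A) : Prop := ∀ f : ℕ → U.S, ∃ i j, i < j ∧ U.le (f i) (f j)

/-- A ULTS is deterministic if the set of initial states and every transition image
are singletons. -/
def Deterministic (U : ULTS A) : Prop :=
  (∃ s, U.init = {s}) ∧ ∀ s a, ∃ t, U.tr s a = {t}

end ULTS

/-- A language is regular if it is accepted by a deterministic finite automaton
with finitely many states. -/
def IsRegularLang {A : Type} (L : Set (List A)) : Prop :=
  ∃ (Q : Type) (_ : Fintype Q) (M : DFA A Q), M.accepts = L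

/-- Two languages are regularly separable if some regular language contains the
first and is disjoint from the second. -/
def RegSep {A : Type} (L1 L2 : Set (List A)) : Prop :=
  ∃ R : Set (List A), IsRegularLang R ∧ L1 ⊆ R ∧ R ∩ L2 = ∅

namespace ULTS

variable {A : Type} (U : ULTS A)

/-- The set of states from which the word can lead to a final state. -/
def accFrom : List A → Set U.S
  | [] => U.final
  | a :: w => {s | ∃ t ∈ U.tr s a, t ∈ accFrom w}

lemma accFrom_up (w : List A) : ∀ {s t : U.S}, U.le s t → s ∈ U.accFrom w → t ∈ U.accFrom w := by
  induction w with
  | nil => exact fun h hs => U.final_up hs h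
  | cons a w ih =>
    rintro s t h ⟨s', hs', hw⟩
    obtain ⟨t', ht', hle⟩ := U.sim a h hs'
    exact ⟨t', ht', ih hle hw⟩

lemma reachSet_inter_final (w : List A) : ∀ P : Set U.S,
    (U.reachSet P w ∩ U.final).Nonempty ↔ ∃ s ∈ P, s ∈ U.accFrom w := by
  induction w with
  | nil => exact fun P => Iff.rfl
  | cons a w ih =>
    intro P
    rw [reachSet, ih]
    simp only [stepSet, Set.mem_iUnion, accFrom, Set.mem_ofPred_eq]
    constructor
    · rintro ⟨t, ⟨s, hs, hst⟩, ht⟩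
      exact ⟨s, hs, t, hst, ht⟩
    · rintro ⟨s, hs, t, hst, ht⟩
      exact ⟨t, ⟨s, hs, hst⟩, ht⟩

lemma reachSet_append (u w : List A) : ∀ P : Set U.S,
    U.reachSet P (u ++ w) = U.reachSet (U.reachSet P u) w := by
  induction u with
  | nil => exact fun P => rfl
  | cons a u ih => exact fun P => ih _

lemma append_mem_lang (u w : List A) :
    u ++ w ∈ U.lang ↔ ∃ s ∈ U.reachSet U.init u, s ∈ U.accFrom w := by
  rw [← reachSet_inter_final, ← reachSet_append]
  rfl

/-- Otherwise one could choose states `s₀, s₁, …` and words `v₀, v₁, … ∉ K` such that `sₙ` accepts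
`vₙ` but none of its predecessors; then `sᵢ ≤ sⱼ` is impossible for `i < j`. -/
lemma exists_finset_witness (hU : U.IsWQO) (K : Set (List A)) :
    ∃ F : Finset (List A), (∀ v ∈ F, v ∉ K) ∧
      ∀ s v, s ∈ U.accFrom v → v ∉ K → ∃ v' ∈ F, s ∈ U.accFrom v' := by
  classical
  by_contra! hno
  obtain ⟨f, hf, hlt⟩ := exists_seq_of_forall_finset_exists
    (fun p : U.S × List A => p.1 ∈ U.accFrom p.2 ∧ p.2 ∉ K)
    (fun p q => q.1 ∉ U.accFrom p.2) (by
      intro T hT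
      obtain ⟨s, v, hs, hv, h⟩ := hno (T.image Prod.snd) (by
        intro v hv
        obtain ⟨p, hp, rfl⟩ := Finset.mem_image.1 hv
        exact (hT p hp).2)
      exact ⟨(s, v), ⟨hs, hv⟩, fun p hp => h _ (Finset.mem_image_of_mem _ hp)⟩)
  obtain ⟨i, j, hij, hle⟩ := hU fun n => (f n).1
  exact hlt i j hij (U.accFrom_up _ hle (hf i).1)

lemma exists_finset_residual_subset (hU : U.IsWQO) (K : Set (List A)) :
    ∃ F : Finset (List A), (∀ v ∈ F, v ∉ K) ∧
      ∀ u, (∀ v ∈ F, u ++ v ∉ U.lang) → ∀ x, u ++ x ∈ U.lang → x ∈ K := by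
  obtain ⟨F, hFK, hF⟩ := U.exists_finset_witness hU K
  refine ⟨F, hFK, fun u hu x hx => ?_⟩
  by_contra hxK
  obtain ⟨s, hs, hsx⟩ := (U.append_mem_lang u x).1 hx
  obtain ⟨v, hv, hsv⟩ := hF s x hsx hxK
  exact hu v hv ((U.append_mem_lang u v).2 ⟨s, hs, hsv⟩)

end ULTS

/-- A family of subsets of `α` is finite if every point `K` of the compact space `2^α` has a basic
neighbourhood, given by finitely many elements `F'` of `K` and `F` outside `K`, in which `K` is the
only possible member of the family. -/
lemma finite_of_forall_isolated {α : Type*} (X : Set (Set α))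
    (h : ∀ K : Set α, ∃ F F' : Finset α, (∀ v ∈ F, v ∉ K) ∧ (∀ v ∈ F', v ∈ K) ∧
      ∀ R ∈ X, (∀ v ∈ F, v ∉ R) → (∀ v ∈ F', v ∈ R) → R = K) : X.Finite := by
  by_contra hX
  have : (Filter.cofinite ⊓ Filter.principal X).NeBot :=
    Filter.cofinite_inf_principal_neBot_iff.2 hX
  let 𝒰 := Ultrafilter.of (Filter.cofinite ⊓ Filter.principal X)
  have h𝒰 : (𝒰 : Filter (Set α)) ≤ Filter.cofinite ⊓ Filter.principal X := Ultrafilter.of_le _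
  -- The limit of the members of `X` along `𝒰`.
  obtain ⟨F, F', hF, hF', hK⟩ := h {v | ∀ᶠ R in (𝒰 : Filter (Set α)), v ∈ R}
  have e1 : ∀ᶠ R in (𝒰 : Filter (Set α)), ∀ v ∈ F, v ∉ R :=
    (Filter.eventually_all_finset F).2 fun v hv => Ultrafilter.eventually_not.2 (hF v hv)
  have e2 : ∀ᶠ R in (𝒰 : Filter (Set α)), ∀ v ∈ F', v ∈ R :=
    (Filter.eventually_all_finset F').2 hF'
  have e3 : ∀ᶠ R in (𝒰 : Filter (Set α)), R ∈ X :=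
    h𝒰 (Filter.mem_inf_of_right (Filter.mem_principal_self X))
  have e4 : ∀ᶠ R in (𝒰 : Filter (Set α)), R ≠ {v | ∀ᶠ R in (𝒰 : Filter (Set α)), v ∈ R} :=
    h𝒰 (Filter.mem_inf_of_left (Set.finite_singleton _).compl_mem_cofinite)
  obtain ⟨R, h1, h2, h3, h4⟩ := (e1.and (e2.and (e3.and e4))).exists
  exact h4 (hK R h3 h1 h2)

/-- If a language and its complement are both accepted by
upward-compatible WSTS, then the language is regular. -/
theorem wsts_complement_regular {A : Type} [Finite A] (L : Set (List A))
    (h1 : ∃ U : ULTS A, U.IsWQO ∧ U.lang = L)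
    (h2 : ∃ U : ULTS A, U.IsWQO ∧ U.lang = Lᶜ) :
    IsRegularLang L := by
  obtain ⟨U, hU, hUL⟩ := h1
  obtain ⟨V, hV, hVL⟩ := h2
  have hfin : (Set.range (Language.leftQuotient (L : Language A))).Finite := by
    refine finite_of_forall_isolated (α := List A) _ fun K => ?_
    obtain ⟨F, hFK, hF⟩ := U.exists_finset_residual_subset hU K
    obtain ⟨F', hFK', hF'⟩ := V.exists_finset_residual_subset hV Kᶜ
    rw [hUL] at hF
    rw [hVL] at hF'
    refine ⟨F, F', hFK, fun v hv => not_not.1 (hFK' v hv), ?_⟩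
    rintro _ ⟨u, rfl⟩ hR hR'
    ext x
    refine ⟨hF u hR x, fun hx => ?_⟩
    by_contra hxR
    exact hF' u (fun v hv hn => hn (hR' v hv)) x hxR hx
  obtain ⟨Q, hQ, M, hM⟩ := Language.isRegular_iff_finite_range_leftQuotient.2 hfin
  exact ⟨Q, hQ, M, hM⟩
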